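/- Suppose f satisfies α F(u) ≤ u f(u) + β u² + α θ for all u > 0, where F(u) := ∫₀^u f(s) ds, for some α > 2, 0 < β ≤ λ₁(α − 2)/2, θ > 0, and suppose 𝓕₀ := −(1/2)∫_D |∇_γ u₀|² dxdy + ∫_D (F(u₀) − θ) dxdy > 0. Let u be a positive classical solution of the pseudo-parabolic problem, set σ := √(α/2) − 1, M := (1+σ)(1 + 1/σ)(∫_D (u₀² + |∇_γ u₀|²) dxdy)² / (2α 𝓕₀), and define E(t) := ∫₀^t ∫_D (u² + |∇_γ u|²) dxdy dτ + M. Then for all t ≥ 0 in the interval of existence, E''(t) E(t) − (1+σ)(E'(t))² ≥ 0. -/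

import Mathlib

open MeasureTheory Real Set Filter
open scoped ENNReal

noncomputable section

/-- The Baouendi–Grushin space `ℝ^m × ℝ^k`. -/
abbrev GS (m k : ℕ) := EuclideanSpace ℝ (Fin m) × EuclideanSpace ℝ (Fin k)

/-- Unit coordinate vector in the `i`-th `x`-direction. -/
def eX (m k : ℕ) (i : Fin m) : GS m k := (EuclideanSpace.single i (1 : ℝ), 0)

/-- Unit coordinate vector in the `j`-th `y`-direction. -/
def eY (m k : ℕ) (j : Fin k) : GS m k := (0, EuclideanSpace.single j (1 : ℝ))

/-- Squared length `|∇_γ v|²` of the Baouendi–Grushin gradient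
`∇_γ v = (∇_x v, |x|^γ ∇_y v)`. -/
def gradSqG {m k : ℕ} (γ : ℝ) (v : GS m k → ℝ) (z : GS m k) : ℝ :=
  (∑ i, (fderiv ℝ v z (eX m k i)) ^ 2) +
    ‖z.1‖ ^ (2 * γ) * ∑ j, (fderiv ℝ v z (eY m k j)) ^ 2

/-- Pointwise inner product `∇_γ v · ∇_γ w` of Baouendi–Grushin gradients. -/
def dotG {m k : ℕ} (γ : ℝ) (v w : GS m k → ℝ) (z : GS m k) : ℝ :=
  (∑ i, fderiv ℝ v z (eX m k i) * fderiv ℝ w z (eX m k i)) +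
    ‖z.1‖ ^ (2 * γ) * ∑ j, fderiv ℝ v z (eY m k j) * fderiv ℝ w z (eY m k j)

/-- The Baouendi–Grushin operator `Δ_γ v = Δ_x v + |x|^{2γ} Δ_y v`. -/
def lapG {m k : ℕ} (γ : ℝ) (v : GS m k → ℝ) (z : GS m k) : ℝ :=
  (∑ i, fderiv ℝ (fun w => fderiv ℝ v w (eX m k i)) z (eX m k i)) +
    ‖z.1‖ ^ (2 * γ) * ∑ j, fderiv ℝ (fun w => fderiv ℝ v w (eY m k j)) z (eY m k j)

/-- The antiderivative `F(x) = ∫₀ˣ f(s) ds`. -/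
def Fprim (f : ℝ → ℝ) (x : ℝ) : ℝ := ∫ s in (0 : ℝ)..x, f s

/-- A domain as in the paper: bounded, open, connected, and such that `D` minus the
degeneracy set `{(x,y) ∈ closure D : x = 0}` consists of only one connected component. -/
structure GoodDomain (m k : ℕ) (D : Set (GS m k)) : Prop where
  isOpen : IsOpen D
  isConnected : IsConnected D
  isBounded : Bornology.IsBounded D
  conn_off_degeneracy : IsConnected (D \ {z : GS m k | z ∈ closure D ∧ z.1 = 0})

/-- `D` supports the divergence formula: Green's first identity for `Δ_γ` holds for smooth
functions, the first of which vanishes on `∂D`. -/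
def SupportsDivFormula {m k : ℕ} (γ : ℝ) (D : Set (GS m k)) : Prop :=
  ∀ v w : GS m k → ℝ, ContDiff ℝ (⊤ : ℕ∞) v → ContDiff ℝ (⊤ : ℕ∞) w →
    (∀ z ∈ frontier D, v z = 0) →
    ∫ z in D, v z * lapG γ w z = -∫ z in D, dotG γ v w z

/-- The nonlinearity `f`: locally Lipschitz on `ℝ`, `f(0) = 0`, and `f(u) > 0` for `u > 0`. -/
structure GoodNonlinearity (f : ℝ → ℝ) : Prop where
  locallyLipschitz : LocallyLipschitz f
  zero : f 0 = 0
  pos : ∀ s : ℝ, 0 < s → 0 < f s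

/-- The initial datum `u₀`: of class `C¹`, non-negative and non-trivial on `closure D`,
vanishing on `∂D`. -/
structure GoodInitialData {m k : ℕ} (D : Set (GS m k)) (u₀ : GS m k → ℝ) : Prop where
  contDiff : ContDiff ℝ 1 u₀
  nonneg : ∀ z ∈ closure D, 0 ≤ u₀ z
  nontrivial : ∃ z ∈ D, u₀ z ≠ 0
  bdry : ∀ z ∈ frontier D, u₀ z = 0

/-- A positive classical solution `u` of the pseudo-parabolic problem
`u_t − Δ_γ u_t − Δ_γ u = f(u)` in `D × (0,T)`, `u = 0` on `∂D × (0,T)`, `u(0) = u₀`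
on `closure D`, where `T ∈ (0,∞]` is the interval of existence; `u` is smooth enough
that all derivatives exist. -/
structure IsPosSolution {m k : ℕ} (γ : ℝ) (D : Set (GS m k)) (f : ℝ → ℝ)
    (u₀ : GS m k → ℝ) (T : ℝ≥0∞) (u : ℝ → GS m k → ℝ) : Prop where
  smooth : ContDiff ℝ (⊤ : ℕ∞) (fun p : ℝ × GS m k => u p.1 p.2)
  pos : ∀ t : ℝ, 0 < t → ENNReal.ofReal t < T → ∀ z ∈ D, 0 < u t z
  eqn : ∀ t : ℝ, 0 < t → ENNReal.ofReal t < T → ∀ z ∈ D,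
    deriv (fun s => u s z) t
      - lapG γ (fun w => deriv (fun s => u s w) t) z
      - lapG γ (u t) z = f (u t z)
  bdry : ∀ t : ℝ, 0 < t → ENNReal.ofReal t < T → ∀ z ∈ frontier D, u t z = 0
  init : ∀ z ∈ closure D, u 0 z = u₀ z


lemma aux_closed {T : ℝ≥0∞} (hT : 0 < T) (φ : ℝ → ℝ) (hφ : Continuous φ)
    (h : ∀ t : ℝ, 0 < t → ENNReal.ofReal t < T → 0 ≤ φ t) :
    ∀ t : ℝ, 0 ≤ t → ENNReal.ofReal t < T → 0 ≤ φ t := by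
  intro t ht htT
  rcases ht.eq_or_lt with h0 | h0
  · subst h0
    have h1 : Tendsto φ (nhdsWithin 0 (Ioi 0)) (nhds (φ 0)) :=
      (hφ.tendsto 0).mono_left nhdsWithin_le_nhds
    have h2 : ∀ᶠ s in nhds (0:ℝ), ENNReal.ofReal s < T :=
      (ENNReal.continuous_ofReal.isOpen_preimage _ isOpen_Iio).mem_nhds htT
    refine ge_of_tendsto h1 ?_
    filter_upwards [self_mem_nhdsWithin, nhdsWithin_le_nhds h2] with s hs hs2
    exact h s hs hs2
  · exact h t h0 htT

lemma aux_closed_eq {T : ℝ≥0∞} (hT : 0 < T) (φ ψ : ℝ → ℝ) (hφ : Continuous φ) (hψ : Continuous ψ)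
    (h : ∀ t : ℝ, 0 < t → ENNReal.ofReal t < T → φ t = ψ t) :
    ∀ t : ℝ, 0 ≤ t → ENNReal.ofReal t < T → φ t = ψ t := by
  intro t ht htT
  have a := aux_closed hT (fun t => φ t - ψ t) (hφ.sub hψ)
    (fun t h1 h2 => by simp [h t h1 h2]) t ht htT
  have b := aux_closed hT (fun t => ψ t - φ t) (hψ.sub hφ)
    (fun t h1 h2 => by simp [h t h1 h2]) t ht htT
  try simp only at a b
  linarith

lemma aux_int {m k : ℕ} {D : Set (GS m k)} (hb : Bornology.IsBounded D)
    {g : GS m k → ℝ} (hg : Continuous g) : IntegrableOn g D volume :=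
  (hg.continuousOn.integrableOn_compact hb.isCompact_closure).mono_set subset_closure

lemma aux_cont {m k : ℕ} {D : Set (GS m k)} (hb : Bornology.IsBounded D)
    {g : ℝ → GS m k → ℝ} (hg : Continuous (Function.uncurry g)) :
    Continuous (fun t => ∫ z in D, g t z) := by
  have h := continuous_parametric_integral_of_continuous (μ := volume.restrict D) hg
    hb.isCompact_closure
  have e : (volume.restrict D).restrict (closure D) = volume.restrict D := by
    rw [Measure.restrict_restrict isClosed_closure.measurableSet,
      inter_eq_self_of_subset_right subset_closure]
  rwa [e] at h

lemma aux_deriv {m k : ℕ} {D : Set (GS m k)} (hb : Bornology.IsBounded D) (hD : MeasurableSet D)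
    {g g' : ℝ → GS m k → ℝ} (hg : Continuous (Function.uncurry g))
    (hg' : Continuous (Function.uncurry g'))
    (hd : ∀ t z, HasDerivAt (fun s => g s z) (g' t z) t) (t : ℝ) :
    HasDerivAt (fun s => ∫ z in D, g s z) (∫ z in D, g' t z) t := by
  have hK : IsCompact (Metric.closedBall t 1 ×ˢ closure D) :=
    (isCompact_closedBall t 1).prod hb.isCompact_closure
  obtain ⟨C, hC⟩ := hK.exists_bound_of_continuousOn hg'.continuousOn
  have hfin : IsFiniteMeasure (volume.restrict D) :=
    ⟨by simpa using hb.measure_lt_top⟩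
  have c1 : ∀ s, Continuous (g s) := fun s => hg.comp (Continuous.prodMk_right s)
  have c2 : ∀ s, Continuous (g' s) := fun s => hg'.comp (Continuous.prodMk_right s)
  refine (hasDerivAt_integral_of_dominated_loc_of_deriv_le (μ := volume.restrict D)
    (F := g) (F' := g') (x₀ := t) (s := Metric.ball t 1) (bound := fun _ => C)
    (Metric.ball_mem_nhds t one_pos) ?_ ?_ ?_ ?_ ?_ ?_).2
  · exact Eventually.of_forall fun s => (c1 s).aestronglyMeasurable
  · exact aux_int hb (c1 t)
  · exact (c2 t).aestronglyMeasurable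
  · filter_upwards [ae_restrict_mem hD] with z hz s hs
    exact hC (s, z) ⟨Metric.ball_subset_closedBall hs, subset_closure hz⟩
  · exact integrable_const C
  · exact Eventually.of_forall fun z s _ => hd s z

lemma aux_norm_cont {m k : ℕ} {γ : ℝ} (hγ : 0 ≤ γ) :
    Continuous (fun z : GS m k => ‖z.1‖ ^ (2 * γ)) :=
  (continuous_norm.comp continuous_fst).rpow_const (fun _ => Or.inr (by positivity))

lemma aux_lap_cont {m k : ℕ} {γ : ℝ} (hγ : 0 ≤ γ) {v : GS m k → ℝ}
    (hv : ContDiff ℝ (⊤ : ℕ∞) v) : Continuous (lapG γ v) := by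
  have h1 : ∀ e e' : GS m k, Continuous (fun z => fderiv ℝ (fun w => fderiv ℝ v w e) z e') := by
    intro e e'
    have h2 : ContDiff ℝ (⊤ : ℕ∞) (fun w => fderiv ℝ v w e) :=
      (hv.fderiv_right (m := (⊤ : ℕ∞)) (by simp)).clm_apply contDiff_const
    exact (h2.continuous_fderiv (by simp)).clm_apply continuous_const
  unfold lapG
  exact (continuous_finsetSum _ fun i _ => h1 _ _).add
    ((aux_norm_cont hγ).mul (continuous_finsetSum _ fun i _ => h1 _ _))

lemma aux_slice {m k : ℕ} {P : ℝ × GS m k → ℝ} (hP : ContDiff ℝ (⊤ : ℕ∞) P) (t : ℝ)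
    (z e : GS m k) : fderiv ℝ (fun w => P (t, w)) z e = fderiv ℝ P (t, z) (0, e) := by
  have h : HasFDerivAt P (fderiv ℝ P (t, z)) (t, z) :=
    (hP.differentiable (by simp) (t, z)).hasFDerivAt
  have h2 : HasFDerivAt (fun w : GS m k => (t, w)) (ContinuousLinearMap.inr ℝ ℝ (GS m k)) z :=
    hasFDerivAt_prodMk_right t z
  have h3 := (h.comp z h2).fderiv
  have h4 : (P ∘ fun w : GS m k => (t, w)) = fun w => P (t, w) := rfl
  rw [h4] at h3
  rw [h3]; simp

lemma aux_time {m k : ℕ} {P : ℝ × GS m k → ℝ} (hP : ContDiff ℝ (⊤ : ℕ∞) P) (t : ℝ)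
    (z : GS m k) : HasDerivAt (fun s => P (s, z)) (fderiv ℝ P (t, z) (1, 0)) t := by
  have h : HasFDerivAt P (fderiv ℝ P (t, z)) (t, z) :=
    (hP.differentiable (by simp) (t, z)).hasFDerivAt
  have h2 : HasDerivAt (fun s : ℝ => (s, z)) ((1 : ℝ), (0 : GS m k)) t :=
    (hasDerivAt_id t).prodMk (hasDerivAt_const t z)
  exact h.comp_hasDerivAt t h2

lemma aux_dir {m k : ℕ} {P : ℝ × GS m k → ℝ} (hP : ContDiff ℝ (⊤ : ℕ∞) P) (e : ℝ × GS m k) :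
    ContDiff ℝ (⊤ : ℕ∞) (fun p => fderiv ℝ P p e) :=
  (hP.fderiv_right (m := (⊤ : ℕ∞)) (by simp)).clm_apply contDiff_const

lemma aux_mixed {m k : ℕ} {P : ℝ × GS m k → ℝ} (hP : ContDiff ℝ (⊤ : ℕ∞) P) (t : ℝ)
    (z e : GS m k) : HasDerivAt (fun s => fderiv ℝ (fun w => P (s, w)) z e)
      (fderiv ℝ (fun w => fderiv ℝ P (t, w) (1, 0)) z e) t := by
  have h1 := aux_time (aux_dir hP (0, e)) t z
  have h2 := aux_slice (aux_dir hP (1, 0)) t z e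
  have hd : DifferentiableAt ℝ (fderiv ℝ P) (t, z) :=
    ((hP.fderiv_right (m := (⊤ : ℕ∞)) (by simp)).differentiable (by simp)) _
  have h3 : ∀ a b : ℝ × GS m k, fderiv ℝ (fun p => fderiv ℝ P p a) (t, z) b
      = fderiv ℝ (fderiv ℝ P) (t, z) b a := by
    intro a b
    have := (hd.hasFDerivAt.clm_apply (hasFDerivAt_const a (t, z))).fderiv
    rw [this]; simp
  have hs : IsSymmSndFDerivAt ℝ P (t, z) :=
    hP.contDiffAt.isSymmSndFDerivAt (by
      simp only [minSmoothness_of_isRCLikeNormedField]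
      exact WithTop.coe_le_coe.2 (le_top : (2 : ℕ∞) ≤ ⊤))
  rw [h2, h3, hs (0, e) (1, 0), ← h3]
  simp_rw [aux_slice hP]
  exact h1

lemma aux_dot_cont {m k : ℕ} {γ : ℝ} (hγ : 0 ≤ γ) {P Q : ℝ × GS m k → ℝ}
    (hP : ContDiff ℝ (⊤ : ℕ∞) P) (hQ : ContDiff ℝ (⊤ : ℕ∞) Q) :
    Continuous (Function.uncurry fun t z =>
      dotG γ (fun w => P (t, w)) (fun w => Q (t, w)) z) := by
  have c : ∀ (R : ℝ × GS m k → ℝ) (hR : ContDiff ℝ (⊤ : ℕ∞) R) (e : GS m k),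
      Continuous (fun p : ℝ × GS m k => fderiv ℝ (fun w => R (p.1, w)) p.2 e) := by
    intro R hR e
    simp_rw [aux_slice hR]
    exact (aux_dir hR (0, e)).continuous
  unfold dotG
  exact (continuous_finsetSum _ fun i _ => (c P hP _).mul (c Q hQ _)).add
    (((aux_norm_cont hγ).comp continuous_snd).mul
      (continuous_finsetSum _ fun i _ => (c P hP _).mul (c Q hQ _)))

lemma aux_grad_eq {m k : ℕ} (γ : ℝ) (v : GS m k → ℝ) (z : GS m k) :
    gradSqG γ v z = dotG γ v v z := by
  simp [gradSqG, dotG, sq]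

lemma aux_grad_deriv {m k : ℕ} (γ : ℝ) {P : ℝ × GS m k → ℝ}
    (hP : ContDiff ℝ (⊤ : ℕ∞) P) (t : ℝ) (z : GS m k) :
    HasDerivAt (fun s => gradSqG γ (fun w => P (s, w)) z)
      (2 * dotG γ (fun w => P (t, w)) (fun w => fderiv ℝ P (t, w) (1, 0)) z) t := by
  unfold gradSqG dotG
  have h : ∀ e, HasDerivAt (fun s => (fderiv ℝ (fun w => P (s, w)) z e) ^ 2)
      (2 * (fderiv ℝ (fun w => P (t, w)) z e *
        fderiv ℝ (fun w => fderiv ℝ P (t, w) (1, 0)) z e)) t := by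
    intro e
    refine ((aux_mixed hP t z e).fun_pow 2).congr_deriv ?_
    simp; ring
  refine ((HasDerivAt.fun_sum fun i _ => h (eX m k i)).add
    ((HasDerivAt.fun_sum fun j _ => h (eY m k j)).const_mul (‖z.1‖ ^ (2 * γ)))).congr_deriv ?_
  simp only [← Finset.mul_sum]; ring

lemma aux_grad_quad {m k : ℕ} (γ : ℝ) (v w : GS m k → ℝ) (z : GS m k) (s : ℝ) :
    0 ≤ s ^ 2 * gradSqG γ v z + s * (2 * dotG γ v w z) + gradSqG γ w z := by
  have key : s ^ 2 * gradSqG γ v z + s * (2 * dotG γ v w z) + gradSqG γ w z =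
      (∑ i, (s * fderiv ℝ v z (eX m k i) + fderiv ℝ w z (eX m k i)) ^ 2) +
      ‖z.1‖ ^ (2 * γ) * ∑ j, (s * fderiv ℝ v z (eY m k j) + fderiv ℝ w z (eY m k j)) ^ 2 := by
    have h : ∀ (n : ℕ) (a b : Fin n → ℝ), ∑ i, (s * a i + b i) ^ 2 =
        s ^ 2 * ∑ i, a i ^ 2 + s * (2 * ∑ i, a i * b i) + ∑ i, b i ^ 2 := by
      intro n a b
      simp only [Finset.mul_sum, ← Finset.sum_add_distrib]
      exact Finset.sum_congr rfl fun i _ => by ring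
    rw [h, h]; unfold gradSqG dotG; ring
  rw [key]; positivity

lemma aux_core (α F₀ σ M t : ℝ) (hα : 2 < α) (hF : 0 < F₀) (hσ : σ = Real.sqrt (α / 2) - 1)
    (ht : 0 ≤ t) (G Gd Fn H : ℝ → ℝ)
    (hM : M = (1 + σ) * (1 + 1 / σ) * (G 0) ^ 2 / (2 * α * F₀))
    (cG : Continuous G) (cGd : Continuous Gd) (cH : Continuous H)
    (dG : ∀ s, HasDerivAt G (Gd s) s)
    (hG0 : ∀ s, 0 ≤ G s) (hH0 : ∀ s, 0 ≤ H s)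
    (hq : ∀ r s, 0 ≤ r ^ 2 * G s + r * Gd s + H s)
    (hFn : Fn t = F₀ + ∫ s in (0:ℝ)..t, H s) (hineq : 2 * α * Fn t ≤ Gd t) :
    0 ≤ Gd t * ((∫ s in (0:ℝ)..t, G s) + M) - (1 + σ) * (G t) ^ 2 := by
  set A := ∫ s in (0:ℝ)..t, G s with hA
  set B := ∫ s in (0:ℝ)..t, H s with hB
  have hA0 : 0 ≤ A := intervalIntegral.integral_nonneg ht fun s _ => hG0 s
  have hB0 : 0 ≤ B := intervalIntegral.integral_nonneg ht fun s _ => hH0 s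
  have hC : ∫ s in (0:ℝ)..t, Gd s = G t - G 0 :=
    intervalIntegral.integral_eq_sub_of_hasDerivAt (fun s _ => dG s) (cGd.intervalIntegrable _ _)
  have hquad : ∀ r : ℝ, 0 ≤ A * (r * r) + (G t - G 0) * r + B := by
    intro r
    have h1 : 0 ≤ ∫ s in (0:ℝ)..t, (r ^ 2 * G s + r * Gd s + H s) :=
      intervalIntegral.integral_nonneg ht fun s _ => hq r s
    have c1 : Continuous fun s => r ^ 2 * G s + r * Gd s := (cG.const_mul _).add (cGd.const_mul _)
    rw [intervalIntegral.integral_add (c1.intervalIntegrable _ _)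
      (cH.intervalIntegrable _ _), intervalIntegral.integral_add
      ((cG.const_mul _).intervalIntegrable _ _) ((cGd.const_mul _).intervalIntegrable _ _),
      intervalIntegral.integral_const_mul, intervalIntegral.integral_const_mul, hC] at h1
    linarith
  have hdisc := discrim_le_zero hquad
  unfold discrim at hdisc
  have hs1 : 1 < Real.sqrt (α / 2) := by
    rw [Real.lt_sqrt (by norm_num)]; linarith
  have hσ0 : 0 < σ := by rw [hσ]; linarith
  have hsq : (1 + σ) ^ 2 = α / 2 := by
    rw [hσ]; ring_nf; rw [Real.sq_sqrt (by linarith)]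
  have hM0 : 0 ≤ M := by rw [hM]; positivity
  have hMe : (1 + σ) * (1 + 1 / σ) * (G 0) ^ 2 = 2 * α * F₀ * M := by
    rw [hM]; field_simp
  have hy : (G t) ^ 2 ≤ (1 + σ) * (G t - G 0) ^ 2 + (1 + 1 / σ) * (G 0) ^ 2 := by
    have h1 : (1 + σ) * (G t - G 0) ^ 2 + (1 + 1 / σ) * (G 0) ^ 2 - (G t) ^ 2
      = (σ * (G t - G 0) - G 0) ^ 2 / σ := by field_simp; ring
    have h2 : 0 ≤ (σ * (G t - G 0) - G 0) ^ 2 / σ := by positivity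
    linarith
  have h1 : (1 + σ) * (G t) ^ 2 ≤ 2 * α * (A * B) + 2 * α * F₀ * M := by
    calc (1 + σ) * (G t) ^ 2
        ≤ (1 + σ) * ((1 + σ) * (G t - G 0) ^ 2 + (1 + 1 / σ) * (G 0) ^ 2) := by gcongr
      _ = (1 + σ) ^ 2 * (G t - G 0) ^ 2 + (1 + σ) * (1 + 1 / σ) * (G 0) ^ 2 := by ring
      _ = α / 2 * (G t - G 0) ^ 2 + 2 * α * F₀ * M := by rw [hsq, hMe]
      _ ≤ α / 2 * (4 * A * B) + 2 * α * F₀ * M := by gcongr; linarith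
      _ = _ := by ring
  have h2 : 2 * α * (F₀ + B) * (A + M) ≤ Gd t * (A + M) := by
    rw [hFn] at hineq
    exact mul_le_mul_of_nonneg_right hineq (by linarith)
  have h3 : 0 ≤ 2 * α * (F₀ * A + B * M) := by positivity
  nlinarith

/-- **Concavity estimate.** Under the growth condition `α F(u) ≤ u f(u) + β u² + α θ`
with `α > 2`, `0 < β ≤ λ₁(α−2)/2`, `θ > 0` and `𝓕₀ > 0`, let `u` be a positive classical
solution, `σ := √(α/2) − 1`, `M := (1+σ)(1+1/σ)(∫_D (u₀² + |∇_γ u₀|²))²/(2α𝓕₀)`, and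
`E(t) := ∫₀ᵗ ∫_D (u² + |∇_γ u|²) + M`. Then `E''(t)E(t) − (1+σ)(E'(t))² ≥ 0` for all
`t ≥ 0` in the interval of existence. -/
theorem grushin_concavity_estimate
    (m k : ℕ) (hm : 1 ≤ m) (hk : 1 ≤ k) (γ : ℝ) (hγ : 0 ≤ γ)
    (D : Set (GS m k)) (hD : GoodDomain m k D) (hDiv : SupportsDivFormula γ D)
    (f : ℝ → ℝ) (hf : GoodNonlinearity f)
    (α β θ lam1 : ℝ) (hα : 2 < α) (hβpos : 0 < β) (hβ : β ≤ lam1 * (α - 2) / 2)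
    (hθ : 0 < θ) (hlam1 : 0 < lam1)
    (hPoincare : ∀ v : GS m k → ℝ, ContDiff ℝ 1 v → (∀ z ∈ frontier D, v z = 0) →
      lam1 * ∫ z in D, (v z) ^ 2 ≤ ∫ z in D, gradSqG γ v z)
    (hgrowth : ∀ s : ℝ, 0 < s → α * Fprim f s ≤ s * f s + β * s ^ 2 + α * θ)
    (u₀ : GS m k → ℝ) (hu₀ : GoodInitialData D u₀)
    (hu₀int : IntegrableOn (fun z => (u₀ z) ^ 2 + gradSqG γ u₀ z) D volume)
    (F₀ : ℝ)
    (hF₀ : F₀ = -(1 / 2) * (∫ z in D, gradSqG γ u₀ z) + ∫ z in D, (Fprim f (u₀ z) - θ))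
    (hF₀pos : 0 < F₀)
    (σ M : ℝ) (hσ : σ = Real.sqrt (α / 2) - 1)
    (hM : M = (1 + σ) * (1 + 1 / σ) *
      (∫ z in D, ((u₀ z) ^ 2 + gradSqG γ u₀ z)) ^ 2 / (2 * α * F₀))
    (T : ℝ≥0∞) (hT : 0 < T) (u : ℝ → GS m k → ℝ)
    (hu : IsPosSolution γ D f u₀ T u) :
    ∀ t : ℝ, 0 ≤ t → ENNReal.ofReal t < T →
      ∃ d : ℝ,
        HasDerivAt (fun s => (∫ τ in (0 : ℝ)..s, ∫ z in D, ((u τ z) ^ 2 + gradSqG γ (u τ) z)) + M)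
          (∫ z in D, ((u t z) ^ 2 + gradSqG γ (u t) z)) t ∧
        HasDerivAt (fun s => ∫ z in D, ((u s z) ^ 2 + gradSqG γ (u s) z)) d t ∧
        0 ≤ d * ((∫ τ in (0 : ℝ)..t, ∫ z in D, ((u τ z) ^ 2 + gradSqG γ (u τ) z)) + M)
            - (1 + σ) * (∫ z in D, ((u t z) ^ 2 + gradSqG γ (u t) z)) ^ 2 := by
  have hb := hD.isBounded
  have hmeas := hD.isOpen.measurableSet
  obtain ⟨P, hPdef⟩ : ∃ P : ℝ × GS m k → ℝ, P = fun p => u p.1 p.2 := ⟨_, rfl⟩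
  have hP : ContDiff ℝ (⊤ : ℕ∞) P := hPdef ▸ hu.smooth
  have huP : ∀ t, u t = fun w => P (t, w) := fun t => by rw [hPdef]
  obtain ⟨Q, hQdef⟩ : ∃ Q : ℝ × GS m k → ℝ, Q = fun p => fderiv ℝ P p (1, 0) := ⟨_, rfl⟩
  have hQ : ContDiff ℝ (⊤ : ℕ∞) Q := hQdef ▸ aux_dir hP (1, 0)
  have dP : ∀ t z, HasDerivAt (fun s => P (s, z)) (Q (t, z)) t := by
    intro t z; rw [hQdef]; exact aux_time hP t z
  have dgrad : ∀ t z, HasDerivAt (fun s => gradSqG γ (fun w => P (s, w)) z)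
      (2 * dotG γ (fun w => P (t, w)) (fun w => Q (t, w)) z) t := by
    intro t z; rw [hQdef]; exact aux_grad_deriv γ hP t z
  have hfc : Continuous f := hf.locallyLipschitz.continuous
  have dF : ∀ x, HasDerivAt (Fprim f) (f x) x := fun x =>
    intervalIntegral.integral_hasDerivAt_right (hfc.intervalIntegrable _ _)
      (hfc.stronglyMeasurableAtFilter _ _) hfc.continuousAt
  have hFc : Continuous (Fprim f) := continuous_iff_continuousAt.2 fun x => (dF x).continuousAt
  have cP : Continuous P := hP.continuous
  have cQ : Continuous Q := hQ.continuous
  have cPP := aux_dot_cont hγ hP hP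
  have cPQ := aux_dot_cont hγ hP hQ
  have cQQ := aux_dot_cont hγ hQ hQ
  have sP : ∀ t, ContDiff ℝ (⊤ : ℕ∞) (fun w => P (t, w)) := fun t =>
    hP.comp (contDiff_const.prodMk contDiff_id)
  have sQ : ∀ t, ContDiff ℝ (⊤ : ℕ∞) (fun w => Q (t, w)) := fun t =>
    hQ.comp (contDiff_const.prodMk contDiff_id)
  -- the functionals
  obtain ⟨G, hG⟩ : ∃ G : ℝ → ℝ, G = fun t => ∫ z in D, ((P (t, z)) ^ 2
    + gradSqG γ (fun w => P (t, w)) z) := ⟨_, rfl⟩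
  obtain ⟨Gd, hGd⟩ : ∃ Gd : ℝ → ℝ, Gd = fun t => ∫ z in D, (2 * P (t, z) * Q (t, z)
    + 2 * dotG γ (fun w => P (t, w)) (fun w => Q (t, w)) z) := ⟨_, rfl⟩
  obtain ⟨H, hH⟩ : ∃ H : ℝ → ℝ, H = fun t => ∫ z in D, ((Q (t, z)) ^ 2
    + gradSqG γ (fun w => Q (t, w)) z) := ⟨_, rfl⟩
  obtain ⟨Fn, hFn⟩ : ∃ Fn : ℝ → ℝ, Fn = fun t => ∫ z in D, (-(1 / 2) *
    gradSqG γ (fun w => P (t, w)) z + (Fprim f (P (t, z)) - θ)) := ⟨_, rfl⟩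
  obtain ⟨Fd, hFd⟩ : ∃ Fd : ℝ → ℝ, Fd = fun t => ∫ z in D, (-
    dotG γ (fun w => P (t, w)) (fun w => Q (t, w)) z + f (P (t, z)) * Q (t, z)) := ⟨_, rfl⟩
  have jPP : Continuous (Function.uncurry fun t z => gradSqG γ (fun w => P (t, w)) z) := by
    simpa only [aux_grad_eq] using cPP
  have jQQ : Continuous (Function.uncurry fun t z => gradSqG γ (fun w => Q (t, w)) z) := by
    simpa only [aux_grad_eq] using cQQ
  have jG : Continuous (Function.uncurry fun t z => (P (t, z)) ^ 2
    + gradSqG γ (fun w => P (t, w)) z) := (cP.pow 2).add jPP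
  have jGd : Continuous (Function.uncurry fun t z => 2 * P (t, z) * Q (t, z)
    + 2 * dotG γ (fun w => P (t, w)) (fun w => Q (t, w)) z) :=
    ((cP.const_mul 2).mul cQ).add (cPQ.const_mul 2)
  have jH : Continuous (Function.uncurry fun t z => (Q (t, z)) ^ 2
    + gradSqG γ (fun w => Q (t, w)) z) := (cQ.pow 2).add jQQ
  have jFn : Continuous (Function.uncurry fun t z => -(1 / 2) *
    gradSqG γ (fun w => P (t, w)) z + (Fprim f (P (t, z)) - θ)) :=
    (jPP.const_mul _).add ((hFc.comp cP).sub continuous_const)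
  have jFd : Continuous (Function.uncurry fun t z => -
    dotG γ (fun w => P (t, w)) (fun w => Q (t, w)) z + f (P (t, z)) * Q (t, z)) :=
    cPQ.neg.add ((hfc.comp cP).mul cQ)
  have cG : Continuous G := hG ▸ aux_cont hb jG
  have cGd : Continuous Gd := hGd ▸ aux_cont hb jGd
  have cH : Continuous H := hH ▸ aux_cont hb jH
  have cFn : Continuous Fn := hFn ▸ aux_cont hb jFn
  have cFd : Continuous Fd := hFd ▸ aux_cont hb jFd
  have dG : ∀ t, HasDerivAt G (Gd t) t := by
    intro t
    rw [hG, hGd]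
    refine aux_deriv hb hmeas jG jGd (fun t z => ?_) t
    refine (((dP t z).fun_pow 2).add (dgrad t z)).congr_deriv ?_
    simp
  have dFn : ∀ t, HasDerivAt Fn (Fd t) t := by
    intro t
    rw [hFn, hFd]
    refine aux_deriv hb hmeas jFn jFd (fun t z => ?_) t
    refine (((dgrad t z).const_mul (-(1/2))).add
      (((dF (P (t, z))).comp t (dP t z)).sub_const θ)).congr_deriv ?_
    ring
  have slice : ∀ {g : ℝ → GS m k → ℝ}, Continuous (Function.uncurry g) → ∀ t,
      IntegrableOn (g t) D volume := fun hg t => aux_int hb (hg.comp (Continuous.prodMk_right t))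
  have cPt : ∀ t, Continuous fun z => P (t, z) := fun t => (sP t).continuous
  have cQt : ∀ t, Continuous fun z => Q (t, z) := fun t => (sQ t).continuous
  have heqn : ∀ t : ℝ, 0 < t → ENNReal.ofReal t < T → ∀ z ∈ D,
      Q (t, z) - lapG γ (fun w => Q (t, w)) z - lapG γ (fun w => P (t, w)) z
        = f (P (t, z)) := by
    intro t h0 hT z hz
    have h1 := hu.eqn t h0 hT z hz
    have h2 : ∀ w, deriv (fun s => u s w) t = Q (t, w) := by
      intro w
      rw [← (dP t w).deriv, hPdef]
    simp only [h2] at h1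
    rw [huP t] at h1
    exact h1
  have hbP : ∀ t : ℝ, 0 < t → ENNReal.ofReal t < T → ∀ z ∈ frontier D, P (t, z) = 0 := by
    intro t h0 hT z hz
    rw [hPdef]; exact hu.bdry t h0 hT z hz
  have hbQ : ∀ t : ℝ, 0 < t → ENNReal.ofReal t < T → ∀ z ∈ frontier D, Q (t, z) = 0 := by
    intro t h0 hT z hz
    have h2 : ∀ᶠ s in nhds t, ENNReal.ofReal s < T :=
      (ENNReal.continuous_ofReal.isOpen_preimage _ isOpen_Iio).mem_nhds hT
    have h3 : (fun s => P (s, z)) =ᶠ[nhds t] fun _ => 0 := by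
      filter_upwards [h2, lt_mem_nhds h0] with s a b
      exact hbP s b a z hz
    rw [← (dP t z).deriv, h3.deriv_eq]; simp
  have hFdH : ∀ t : ℝ, 0 ≤ t → ENNReal.ofReal t < T → Fd t = H t := by
    refine aux_closed_eq hT Fd H cFd cH fun t h0 hT => ?_
    have e1 := hDiv _ _ (sQ t) (sP t) (hbQ t h0 hT)
    have e2 := hDiv _ _ (sQ t) (sQ t) (hbQ t h0 hT)
    have e3 : ∀ z, dotG γ (fun w => Q (t, w)) (fun w => P (t, w)) z =
        dotG γ (fun w => P (t, w)) (fun w => Q (t, w)) z := by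
      intro z; simp [dotG, mul_comm]
    have i1 : IntegrableOn (fun z => Q (t, z) * lapG γ (fun w => P (t, w)) z) D :=
      aux_int hb ((cQt t).mul (aux_lap_cont hγ (sP t)))
    have i2 : IntegrableOn (fun z => Q (t, z) * lapG γ (fun w => Q (t, w)) z) D :=
      aux_int hb ((cQt t).mul (aux_lap_cont hγ (sQ t)))
    have i3 : IntegrableOn (fun z => Q (t, z) ^ 2) D := aux_int hb ((cQt t).pow 2)
    have i32 : IntegrableOn (fun z => Q (t, z) ^ 2 - Q (t, z) * lapG γ (fun w => Q (t, w)) z) D :=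
      i3.sub i2
    have e4 : ∫ z in D, f (P (t, z)) * Q (t, z) = ∫ z in D, (Q (t, z) ^ 2
        - Q (t, z) * lapG γ (fun w => Q (t, w)) z - Q (t, z) * lapG γ (fun w => P (t, w)) z) := by
      refine setIntegral_congr_fun hmeas fun z hz => ?_
      try simp only
      rw [← heqn t h0 hT z hz]; ring
    rw [integral_sub i32 i1, integral_sub i3 i2, e1, e2] at e4
    simp only [e3] at e4
    rw [hFd, hH]
    try simp only
    have i7 : IntegrableOn (fun z => -dotG γ (fun w => P (t, w)) (fun w => Q (t, w)) z) D :=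
      (slice cPQ t).neg
    have i8 : IntegrableOn (fun z => f (P (t, z)) * Q (t, z)) D :=
      aux_int hb ((hfc.comp (cPt t)).mul (cQt t))
    rw [integral_add i7 i8,
      integral_add i3 (slice jQQ t), integral_neg, e4]
    simp only [aux_grad_eq]
    ring
  have hGF : ∀ t : ℝ, 0 ≤ t → ENNReal.ofReal t < T → 0 ≤ Gd t - 2 * α * Fn t := by
    refine aux_closed hT (fun t => Gd t - 2 * α * Fn t) (cGd.sub (cFn.const_mul _))
      fun t h0 hT => ?_
    have e1 := hDiv _ _ (sP t) (sP t) (hbP t h0 hT)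
    have e2 := hDiv _ _ (sP t) (sQ t) (hbP t h0 hT)
    have i1 : IntegrableOn (fun z => P (t, z) * lapG γ (fun w => P (t, w)) z) D :=
      aux_int hb ((cPt t).mul (aux_lap_cont hγ (sP t)))
    have i2 : IntegrableOn (fun z => P (t, z) * lapG γ (fun w => Q (t, w)) z) D :=
      aux_int hb ((cPt t).mul (aux_lap_cont hγ (sQ t)))
    have i3 : IntegrableOn (fun z => P (t, z) * Q (t, z)) D := aux_int hb ((cPt t).mul (cQt t))
    have i4 : IntegrableOn (fun z => P (t, z) ^ 2) D := aux_int hb ((cPt t).pow 2)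
    have i5 : IntegrableOn (fun z => P (t, z) * f (P (t, z))) D :=
      aux_int hb ((cPt t).mul (hfc.comp (cPt t)))
    have i6 : IntegrableOn (fun z => Fprim f (P (t, z)) - θ) D :=
      aux_int hb ((hFc.comp (cPt t)).sub continuous_const)
    have i32 : IntegrableOn (fun z => P (t, z) * Q (t, z) - P (t, z) * lapG γ (fun w => Q (t, w)) z) D :=
      i3.sub i2
    have e4 : ∫ z in D, P (t, z) * f (P (t, z)) = ∫ z in D, (P (t, z) * Q (t, z)
        - P (t, z) * lapG γ (fun w => Q (t, w)) z - P (t, z) * lapG γ (fun w => P (t, w)) z) := by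
      refine setIntegral_congr_fun hmeas fun z hz => ?_
      try simp only
      rw [← heqn t h0 hT z hz]; ring
    rw [integral_sub i32 i1, integral_sub i3 i2, e1, e2] at e4
    have e5 : ∫ z in D, α * (Fprim f (P (t, z)) - θ) ≤
        ∫ z in D, (P (t, z) * f (P (t, z)) + β * P (t, z) ^ 2) := by
      refine setIntegral_mono_on (i6.const_mul α) (i5.add (i4.const_mul β)) hmeas fun z hz => ?_
      have hp : 0 < P (t, z) := by rw [hPdef]; exact hu.pos t h0 hT z hz
      have := hgrowth _ hp
      linarith
    rw [integral_const_mul, integral_add i5 (i4.const_mul β), integral_const_mul] at e5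
    have e6 := hPoincare _ ((sP t).of_le (by simp)) (hbP t h0 hT)
    have e7 : Gd t = 2 * (∫ z in D, P (t, z) * Q (t, z)) +
        2 * ∫ z in D, dotG γ (fun w => P (t, w)) (fun w => Q (t, w)) z := by
      rw [hGd]
      simp only [mul_assoc]
      rw [integral_add (i3.const_mul 2) ((slice cPQ t).const_mul 2), integral_const_mul,
        integral_const_mul]
    have e8 : Fn t = -(1 / 2) * (∫ z in D, gradSqG γ (fun w => P (t, w)) z) +
        ∫ z in D, (Fprim f (P (t, z)) - θ) := by
      rw [hFn]
      try simp only
      rw [integral_add ((slice jPP t).const_mul _) i6, integral_const_mul]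
    simp only [← aux_grad_eq] at e4
    have hp0 : 0 ≤ ∫ z in D, P (t, z) ^ 2 := integral_nonneg fun z => by positivity
    have e9 := mul_le_mul_of_nonneg_left e6 (by linarith : 0 ≤ α - 2)
    have e10 := mul_le_mul_of_nonneg_right hβ hp0
    rw [e7, e8]
    try simp only at e6 e9
    linarith
  have hP0 : ∀ z ∈ D, P (0, z) = u₀ z := by
    intro z hz
    rw [hPdef]; exact hu.init z (subset_closure hz)
  have hgrad0 : ∀ z ∈ D, gradSqG γ (fun w => P (0, w)) z = gradSqG γ u₀ z := by
    intro z hz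
    have : (fun w => P (0, w)) =ᶠ[nhds z] u₀ := by
      filter_upwards [hD.isOpen.mem_nhds hz] with w hw using hP0 w hw
    simp only [gradSqG, this.fderiv_eq]
  have hG0 : G 0 = ∫ z in D, ((u₀ z) ^ 2 + gradSqG γ u₀ z) := by
    rw [hG]
    refine setIntegral_congr_fun hmeas fun z hz => ?_
    try simp only
    rw [hP0 z hz, hgrad0 z hz]
  have hFn0 : Fn 0 = F₀ := by
    rw [hF₀, hFn]
    try simp only
    have i6 : IntegrableOn (fun z => Fprim f (P (0, z)) - θ) D :=
      aux_int hb ((hFc.comp (cPt 0)).sub continuous_const)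
    rw [integral_add ((slice jPP 0).const_mul _) i6, integral_const_mul]
    congr 1
    · congr 1
      exact setIntegral_congr_fun hmeas hgrad0
    · refine setIntegral_congr_fun hmeas fun z hz => ?_
      try simp only
      rw [hP0 z hz]
  have gnn : ∀ (v : GS m k → ℝ) z, 0 ≤ gradSqG γ v z := by
    intro v z; unfold gradSqG; positivity
  intro t ht htT
  have hGu : (fun s => ∫ z in D, ((u s z) ^ 2 + gradSqG γ (u s) z)) = G := by
    rw [hG]; simp only [huP]
  have hGu' : ∀ s, ∫ z in D, ((u s z) ^ 2 + gradSqG γ (u s) z) = G s := fun s => congrFun hGu s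
  simp only [hGu']
  refine ⟨Gd t, ?_, dG t, ?_⟩
  · exact (intervalIntegral.integral_hasDerivAt_right (cG.intervalIntegrable _ _)
      (cG.stronglyMeasurableAtFilter _ _) cG.continuousAt).add_const M
  · refine aux_core α F₀ σ M t hα hF₀pos hσ ht G Gd Fn H (by rw [hM, hG0]) cG cGd cH dG
      ?_ ?_ ?_ ?_ ?_
    · intro s; rw [hG]
      exact integral_nonneg fun z => add_nonneg (sq_nonneg _) (gnn _ _)
    · intro s; rw [hH]
      exact integral_nonneg fun z => add_nonneg (sq_nonneg _) (gnn _ _)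
    · intro r s
      rw [hG, hGd, hH]
      try simp only
      have i1 : IntegrableOn (fun z => r ^ 2 * ((P (s, z)) ^ 2 + gradSqG γ (fun w => P (s, w)) z)
          + r * (2 * P (s, z) * Q (s, z)
            + 2 * dotG γ (fun w => P (s, w)) (fun w => Q (s, w)) z)) D :=
        ((slice jG s).const_mul _).add ((slice jGd s).const_mul _)
      rw [← integral_const_mul, ← integral_const_mul,
        ← integral_add ((slice jG s).const_mul _) ((slice jGd s).const_mul _),
        ← integral_add i1 (slice jH s)]
      refine integral_nonneg fun z => ?_
      have h1 := aux_grad_quad γ (fun w => P (s, w)) (fun w => Q (s, w)) z r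
      have h2 := sq_nonneg (r * P (s, z) + Q (s, z))
      simp only [Pi.zero_apply]
      nlinarith
    · have h1 : ∫ s in (0:ℝ)..t, Fd s = Fn t - Fn 0 :=
        intervalIntegral.integral_eq_sub_of_hasDerivAt (fun s _ => dFn s)
          (cFd.intervalIntegrable _ _)
      have h2 : ∫ s in (0:ℝ)..t, Fd s = ∫ s in (0:ℝ)..t, H s := by
        refine intervalIntegral.integral_congr fun s hs => ?_
        rw [uIcc_of_le ht] at hs
        exact hFdH s hs.1 ((ENNReal.ofReal_le_ofReal hs.2).trans_lt htT)
      rw [← h2, h1, hFn0]; ring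
    · linarith [hGF t ht htT]
end
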